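/- For every b ∈ (0,1) and every ε ∈ (0,1/2) there exist constants C > 0 and κ₀ > 0 such that for all κ ∈ (0, κ₀) and all real z: | log( (−e^{−κz}; e^{−κ})_∞ ) − π²/(12κ) + (z − 1/2)·log 2 | ≤ C·( κ(1+|z|)² + κ^b (1+|z|)^{1+2b+ε} ). -/

import Mathlib

open Filter

/-- Infinite q-Pochhammer symbol `(a;q)_∞ = ∏_{k=0}^∞ (1 - a q^k)` for real `a, q`. -/
noncomputable def qPochInfR (a q : ℝ) : ℝ := ∏' k : ℕ, (1 - a * q ^ k)

/-!
With `F x = log (1 + e⁻ˣ)`, the logarithm of the product is `∑ F (κz + kκ)`, a sum of samples of a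
convex function with step `κ`. For convex functions the trapezoidal rule overestimates the integral
by an amount that telescopes, so `κ ∑ F (κz + kκ)` equals `∫_{κz}^∞ F + κ F (κz) / 2` up to
`κ² |F' (κz)| / 2 ≤ κ² / 2`. Finally `∫_0^∞ F = π² / 12`, and as `F` is 1-Lipschitz,
`∫_0^{κz} F` and `F (κz)` may be replaced by `κz log 2` and `log 2`.
-/

open MeasureTheory Set
open scoped Topology NNReal

lemma norm_integral_sub_smul_le_of_lipschitzWith {E : Type*} [NormedAddCommGroup E]
    [NormedSpace ℝ E] [CompleteSpace E] {f : ℝ → E} {K : ℝ≥0} (hf : LipschitzWith K f) (a b : ℝ) :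
    ‖(∫ t in a..b, f t) - (b - a) • f a‖ ≤ K * |b - a| ^ 2 := by
  have hbound : ∀ t ∈ uIoc a b, ‖f t - f a‖ ≤ K * |b - a| := fun t ht =>
    calc ‖f t - f a‖ ≤ K * |t - a| := hf.norm_sub_le t a
      _ ≤ K * |b - a| :=
        mul_le_mul_of_nonneg_left (abs_sub_left_of_mem_uIcc (uIoc_subset_uIcc ht)) K.coe_nonneg
  calc ‖(∫ t in a..b, f t) - (b - a) • f a‖ = ‖∫ t in a..b, (f t - f a)‖ := by
        rw [intervalIntegral.integral_sub (hf.continuous.intervalIntegrable a b) (by simp),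
          intervalIntegral.integral_const]
    _ ≤ K * |b - a| * |b - a| := intervalIntegral.norm_integral_le_of_norm_le_const hbound
    _ = K * |b - a| ^ 2 := by ring

lemma integral_const_add_mul_sub (a b c d : ℝ) :
    ∫ t in a..b, (c + d * (t - a)) = (b - a) * c + (b - a) ^ 2 / 2 * d := by
  rw [intervalIntegral.integral_add (by simp) (Continuous.intervalIntegrable (by fun_prop) a b),
    intervalIntegral.integral_const_mul, intervalIntegral.integral_comp_sub_right (fun t => t),
    intervalIntegral.integral_const, integral_id, smul_eq_mul]
  ring

section Trapezoid

variable {f f' : ℝ → ℝ} {a b h d d' : ℝ}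

lemma mul_deriv_le_sub_of_convexOn {s : Set ℝ} (hf : ConvexOn ℝ s f) (ha : a ∈ s) (hb : b ∈ s)
    (hab : a ≤ b) (hd : HasDerivAt f d a) : (b - a) * d ≤ f b - f a := by
  rcases hab.eq_or_lt with rfl | hlt
  · simp
  have hslope := hf.le_slope_of_hasDerivAt ha hb hlt hd
  rwa [slope_def_field, le_div_iff₀' (sub_pos.2 hlt)] at hslope

lemma sub_le_mul_deriv_of_convexOn {s : Set ℝ} (hf : ConvexOn ℝ s f) (ha : a ∈ s) (hb : b ∈ s)
    (hab : a ≤ b) (hd : HasDerivAt f d b) : f b - f a ≤ (b - a) * d := by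
  rcases hab.eq_or_lt with rfl | hlt
  · simp
  have hslope := hf.slope_le_of_hasDerivAt ha hb hlt hd
  rwa [slope_def_field, div_le_iff₀' (sub_pos.2 hlt)] at hslope

-- The right-hand half of the Hermite–Hadamard inequality.
lemma trapezoidal_error_one_nonneg_of_convexOn (hab : a ≤ b) (hf : ConvexOn ℝ (Icc a b) f)
    (hfi : IntervalIntegrable f volume a b) : 0 ≤ trapezoidal_error f 1 a b := by
  rcases hab.eq_or_lt with rfl | hlt
  · simp
  have hba : b - a ≠ 0 := (sub_pos.2 hlt).ne'
  have le_chord : ∀ t ∈ Icc a b, f t ≤ f a + (f b - f a) / (b - a) * (t - a) := by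
    intro t ht
    have hconv := hf.2 (left_mem_Icc.2 hab) (right_mem_Icc.2 hab)
      (div_nonneg (sub_nonneg.2 ht.2) (sub_nonneg.2 hab))
      (div_nonneg (sub_nonneg.2 ht.1) (sub_nonneg.2 hab)) (by field)
    calc f t = f (((b - t) / (b - a)) • a + ((t - a) / (b - a)) • b) := by
          congr 1; simp only [smul_eq_mul]; field_simp; ring
      _ ≤ ((b - t) / (b - a)) • f a + ((t - a) / (b - a)) • f b := hconv
      _ = f a + (f b - f a) / (b - a) * (t - a) := by
          simp only [smul_eq_mul]; field_simp; ring
  have integral_le : ∫ t in a..b, f t ≤ (b - a) / 2 * (f a + f b) :=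
    calc ∫ t in a..b, f t ≤ ∫ t in a..b, (f a + (f b - f a) / (b - a) * (t - a)) :=
          intervalIntegral.integral_mono_on hab hfi
            (Continuous.intervalIntegrable (by fun_prop) a b) le_chord
      _ = (b - a) / 2 * (f a + f b) := by rw [integral_const_add_mul_sub]; field
  rw [trapezoidal_error, trapezoidal_integral_one]
  exact sub_nonneg.2 integral_le

lemma trapezoidal_error_one_le_of_convexOn (hab : a ≤ b) (hf : ConvexOn ℝ (Icc a b) f)
    (hfi : IntervalIntegrable f volume a b) (hd : HasDerivAt f d a) (hd' : HasDerivAt f d' b) :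
    trapezoidal_error f 1 a b ≤ (b - a) ^ 2 / 2 * (d' - d) := by
  have tangent_le : ∀ t ∈ Icc a b, f a + d * (t - a) ≤ f t := fun t ht => by
    linarith [mul_deriv_le_sub_of_convexOn hf (left_mem_Icc.2 hab) ht ht.1 hd]
  have le_integral : (b - a) * f a + (b - a) ^ 2 / 2 * d ≤ ∫ t in a..b, f t := by
    rw [← integral_const_add_mul_sub]
    exact intervalIntegral.integral_mono_on hab
      (Continuous.intervalIntegrable (by fun_prop) a b) hfi tangent_le
  have secant_le : f b - f a ≤ (b - a) * d' :=
    sub_le_mul_deriv_of_convexOn hf (left_mem_Icc.2 hab) (right_mem_Icc.2 hab) hab hd'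
  calc trapezoidal_error f 1 a b = (b - a) / 2 * (f a + f b) - ∫ t in a..b, f t := by
        rw [trapezoidal_error, trapezoidal_integral_one]
    _ ≤ (b - a) / 2 * (f b - f a) - (b - a) ^ 2 / 2 * d := by linarith
    _ ≤ (b - a) / 2 * ((b - a) * d') - (b - a) ^ 2 / 2 * d := by
        have := sub_nonneg.2 hab
        gcongr
    _ = (b - a) ^ 2 / 2 * (d' - d) := by ring

lemma sum_trapezoidal_error_mem_Icc_of_convexOn (hh : 0 ≤ h) (hf : ConvexOn ℝ (Ici a) f)
    (hf' : ∀ x ∈ Ici a, HasDerivAt f (f' x) x) (N : ℕ) :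
    ∑ k ∈ Finset.range N, trapezoidal_error f 1 (a + k * h) (a + (k + 1 : ℕ) * h)
      ∈ Icc 0 (h ^ 2 / 2 * (f' (a + N * h) - f' a)) := by
  have node_mem (k : ℕ) : a + k * h ∈ Ici a :=
    mem_Ici.2 (le_add_of_nonneg_right (by positivity))
  have node_le (k : ℕ) : a + k * h ≤ a + (k + 1 : ℕ) * h := by gcongr; exact k.le_succ
  have cell_subset (k : ℕ) : Icc (a + k * h) (a + (k + 1 : ℕ) * h) ⊆ Ici a :=
    fun _ ht => (node_mem k).trans ht.1
  have convexOn_cell (k : ℕ) := hf.subset (cell_subset k) (convex_Icc _ _)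
  have integrable_cell (k : ℕ) :
      IntervalIntegrable f volume (a + k * h) (a + (k + 1 : ℕ) * h) :=
    ContinuousOn.intervalIntegrable_of_Icc (node_le k) fun t ht =>
      (hf' t (cell_subset k ht)).continuousAt.continuousWithinAt
  have error_le (k : ℕ) : trapezoidal_error f 1 (a + k * h) (a + (k + 1 : ℕ) * h)
      ≤ h ^ 2 / 2 * (f' (a + (k + 1 : ℕ) * h) - f' (a + k * h)) := by
    refine (trapezoidal_error_one_le_of_convexOn (node_le k) (convexOn_cell k)
      (integrable_cell k) (hf' _ (node_mem k)) (hf' _ (node_mem (k + 1)))).trans_eq ?_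
    push_cast
    ring
  constructor
  · exact Finset.sum_nonneg fun k _ =>
      trapezoidal_error_one_nonneg_of_convexOn (node_le k) (convexOn_cell k) (integrable_cell k)
  · refine (Finset.sum_le_sum fun k _ => error_le k).trans_eq ?_
    rw [← Finset.mul_sum, Finset.sum_range_sub (fun k : ℕ => f' (a + k * h)), Nat.cast_zero,
      zero_mul, add_zero]

lemma tendsto_sum_trapezoidal_error (hh : 0 < h) (hfi : IntegrableOn f (Ioi a))
    (hfs : Summable fun k : ℕ => f (a + k * h)) :
    Tendsto (fun N : ℕ => ∑ k ∈ Finset.range N,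
        trapezoidal_error f 1 (a + k * h) (a + (k + 1 : ℕ) * h)) atTop
      (𝓝 (h * (∑' k : ℕ, f (a + k * h) - f a / 2) - ∫ x in Ioi a, f x)) := by
  have hasSum_trapezoids : HasSum
      (fun k : ℕ => trapezoidal_integral f 1 (a + k * h) (a + (k + 1 : ℕ) * h))
      (h * (∑' k : ℕ, f (a + k * h) - f a / 2)) := by
    have hshift := (hasSum_nat_add_iff' 1).2 hfs.hasSum
    convert! (hfs.hasSum.add hshift).mul_left (h / 2) using 1
    · funext k
      rw [trapezoidal_integral_one]
      push_cast
      ring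
    · rw [Finset.sum_range_one, Nat.cast_zero, zero_mul, add_zero]
      ring
  have sum_integrals (N : ℕ) :
      ∑ k ∈ Finset.range N, ∫ x in (a + k * h)..(a + (k + 1 : ℕ) * h), f x
        = ∫ x in a..(a + N * h), f x := by
    rw [intervalIntegral.sum_integral_adjacent_intervals (a := fun k : ℕ => a + k * h),
      Nat.cast_zero, zero_mul, add_zero]
    exact fun k _ => (intervalIntegrable_iff_integrableOn_Ioc_of_le
      (by gcongr; exact k.le_succ)).2 <| hfi.mono_set <| Ioc_subset_Ioi_self.trans <|
        Ioi_subset_Ioi <| le_add_of_nonneg_right (by positivity)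
  have tendsto_integrals : Tendsto (fun N : ℕ => ∫ x in a..(a + N * h), f x) atTop
      (𝓝 (∫ x in Ioi a, f x)) :=
    intervalIntegral_tendsto_integral_Ioi a hfi <| tendsto_atTop_add_const_left _ _ <|
      tendsto_natCast_atTop_atTop.atTop_mul_const hh
  simp only [trapezoidal_error, Finset.sum_sub_distrib, sum_integrals]
  exact hasSum_trapezoids.tendsto_sum_nat.sub tendsto_integrals

lemma trapezoidal_sum_sub_integral_Ioi_mem_Icc_of_convexOn (hh : 0 < h)
    (hf : ConvexOn ℝ (Ici a) f) (hf' : ∀ x ∈ Ici a, HasDerivAt f (f' x) x)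
    (hfi : IntegrableOn f (Ioi a)) (hfs : Summable fun k : ℕ => f (a + k * h)) :
    h * (∑' k : ℕ, f (a + k * h) - f a / 2) - ∫ x in Ioi a, f x
      ∈ Icc 0 (-(h ^ 2 / 2 * f' a)) := by
  have tendsto_errors := tendsto_sum_trapezoidal_error hh hfi hfs
  have errors_mem := sum_trapezoidal_error_mem_Icc_of_convexOn hh.le hf hf'
  refine ⟨ge_of_tendsto' tendsto_errors fun N => (errors_mem N).1, ?_⟩
  have tendsto_nodes : Tendsto (fun N : ℕ => f (a + N * h)) atTop (𝓝 0) := hfs.tendsto_atTop_zero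
  have tendsto_bound : Tendsto
      (fun N : ℕ => h / 2 * (f (a + (N + 1 : ℕ) * h) - f (a + N * h)) - h ^ 2 / 2 * f' a)
      atTop (𝓝 (-(h ^ 2 / 2 * f' a))) := by
    simpa using (((tendsto_nodes.comp (tendsto_add_atTop_nat 1)).sub tendsto_nodes).const_mul
      (h / 2)).sub_const (h ^ 2 / 2 * f' a)
  refine le_of_tendsto_of_tendsto' tendsto_errors tendsto_bound fun N => ?_
  have node_mem (k : ℕ) : a + k * h ∈ Ici a :=
    mem_Ici.2 (le_add_of_nonneg_right (by positivity))
  have tangent_le : h * f' (a + N * h) ≤ f (a + (N + 1 : ℕ) * h) - f (a + N * h) := by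
    convert mul_deriv_le_sub_of_convexOn hf (node_mem N) (node_mem (N + 1))
      (by gcongr; exact N.le_succ) (hf' _ (node_mem N)) using 2
    push_cast
    ring
  calc ∑ k ∈ Finset.range N, trapezoidal_error f 1 (a + k * h) (a + (k + 1 : ℕ) * h)
      ≤ h ^ 2 / 2 * (f' (a + N * h) - f' a) := (errors_mem N).2
    _ = h / 2 * (h * f' (a + N * h)) - h ^ 2 / 2 * f' a := by ring
    _ ≤ h / 2 * (f (a + (N + 1 : ℕ) * h) - f (a + N * h)) - h ^ 2 / 2 * f' a := by gcongr

end Trapezoid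

lemma hasSum_alternating_one_div_add_one_sq :
    HasSum (fun n : ℕ => (-1 : ℝ) ^ n / ((n : ℝ) + 1) ^ 2) (Real.pi ^ 2 / 12) := by
  have hcos := hasSum_one_div_nat_pow_mul_cos one_ne_zero (x := 2⁻¹) ⟨by norm_num, by norm_num⟩
  rw [← bernoulliFun, bernoulliFun_eval_half, mul_one, bernoulli_two] at hcos
  convert! ((hasSum_nat_add_iff' 1).2 hcos).neg using 1
  · funext n
    rw [show 2 * Real.pi * ((n + 1 : ℕ) : ℝ) * 2⁻¹ = (n + 1 : ℕ) * Real.pi by ring,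
      Real.cos_nat_mul_pi]
    push_cast
    ring
  · norm_num
    ring

/-- The function `x ↦ log (1 + e⁻ˣ)` (minus the logarithm of `Real.sigmoid`), whose values are the
logarithms of the factors of `(-e^{-x}; e^{-κ})_∞`. -/
noncomputable def logOneAddExpNeg (x : ℝ) : ℝ := Real.log (1 + Real.exp (-x))

namespace logOneAddExpNeg

lemma apply_zero : logOneAddExpNeg 0 = Real.log 2 := by
  rw [logOneAddExpNeg, neg_zero, Real.exp_zero, one_add_one_eq_two]

lemma nonneg (x : ℝ) : 0 ≤ logOneAddExpNeg x :=
  Real.log_nonneg (le_add_of_nonneg_right (Real.exp_pos _).le)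

lemma le_exp_neg (x : ℝ) : logOneAddExpNeg x ≤ Real.exp (-x) := by
  have hlog := Real.log_le_sub_one_of_pos (x := 1 + Real.exp (-x)) (by positivity)
  rwa [add_sub_cancel_left] at hlog

lemma hasDerivAt (x : ℝ) : HasDerivAt logOneAddExpNeg (-Real.sigmoid (-x)) x := by
  have hlog := ((hasDerivAt_neg x).exp.const_add 1).log (by positivity)
  refine hlog.congr_deriv ?_
  rw [← Real.sigmoid_mul_rexp_neg, Real.sigmoid_def]
  ring

lemma differentiable : Differentiable ℝ logOneAddExpNeg := fun x => (hasDerivAt x).differentiableAt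

lemma deriv_eq : deriv logOneAddExpNeg = fun x => -Real.sigmoid (-x) :=
  funext fun x => (hasDerivAt x).deriv

lemma convexOn : ConvexOn ℝ univ logOneAddExpNeg := by
  refine Monotone.convexOn_univ_of_deriv differentiable ?_
  rw [deriv_eq]
  exact fun x y hxy => neg_le_neg (Real.sigmoid_le (neg_le_neg hxy))

lemma lipschitzWith_one : LipschitzWith 1 logOneAddExpNeg := by
  refine lipschitzWith_of_nnnorm_deriv_le differentiable fun x => ?_
  rw [deriv_eq, nnnorm_neg, ← NNReal.coe_le_coe, coe_nnnorm,
    Real.norm_of_nonneg (Real.sigmoid_nonneg _)]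
  exact Real.sigmoid_le_one _

lemma integrableOn_Ioi (a : ℝ) : IntegrableOn logOneAddExpNeg (Ioi a) :=
  (integrableOn_exp_neg_Ioi a).mono' differentiable.continuous.aestronglyMeasurable <|
    ae_of_all _ fun x => (Real.norm_of_nonneg (nonneg x)).trans_le (le_exp_neg x)

lemma summable_arithmetic {h : ℝ} (hh : 0 < h) (a : ℝ) :
    Summable fun k : ℕ => logOneAddExpNeg (a + k * h) := by
  have hgeom : Summable fun k : ℕ => Real.exp (-a) * Real.exp (k * -h) :=
    (Real.summable_exp_nat_mul_iff.2 (neg_lt_zero.2 hh)).mul_left _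
  refine hgeom.of_nonneg_of_le (fun k => nonneg _) fun k => (le_exp_neg _).trans_eq ?_
  rw [← Real.exp_add]
  ring_nf

lemma hasSum_exp_series {x : ℝ} (hx : 0 < x) :
    HasSum (fun n : ℕ => (-1) ^ n / ((n : ℝ) + 1) * Real.exp (-((n : ℝ) + 1) * x))
      (logOneAddExpNeg x) := by
  have hlt : |-Real.exp (-x)| < 1 := by
    rwa [abs_neg, Real.abs_exp, Real.exp_lt_one_iff, neg_lt_zero]
  convert! (Real.hasSum_pow_div_log_of_abs_lt_one hlt).neg using 1
  · funext n
    rw [neg_pow (Real.exp (-x)), ← Real.exp_nat_mul, pow_succ]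
    push_cast
    ring_nf
  · rw [neg_neg, sub_neg_eq_add, logOneAddExpNeg]

lemma integral_Ioi_zero : ∫ x in Ioi (0 : ℝ), logOneAddExpNeg x = Real.pi ^ 2 / 12 := by
  have integral_exp (n : ℕ) :
      ∫ x in Ioi (0 : ℝ), Real.exp (-((n : ℝ) + 1) * x) = 1 / ((n : ℝ) + 1) := by
    rw [integral_exp_mul_Ioi (by linarith [n.cast_nonneg (α := ℝ)]), mul_zero, Real.exp_zero,
      neg_div_neg_eq]
  have integrable_terms (n : ℕ) : IntegrableOn
      (fun x => (-1) ^ n / ((n : ℝ) + 1) * Real.exp (-((n : ℝ) + 1) * x)) (Ioi 0) :=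
    (integrableOn_exp_mul_Ioi (by linarith [n.cast_nonneg (α := ℝ)]) 0).const_mul _
  have integral_terms (n : ℕ) :
      ∫ x in Ioi (0 : ℝ), (-1) ^ n / ((n : ℝ) + 1) * Real.exp (-((n : ℝ) + 1) * x)
        = (-1) ^ n / ((n : ℝ) + 1) ^ 2 := by
    rw [integral_const_mul, integral_exp]
    field
  have integral_norm_terms (n : ℕ) :
      ∫ x in Ioi (0 : ℝ), ‖(-1) ^ n / ((n : ℝ) + 1) * Real.exp (-((n : ℝ) + 1) * x)‖
        = ‖(-1 : ℝ) ^ n / ((n : ℝ) + 1) ^ 2‖ := by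
    simp only [norm_mul, Real.norm_of_nonneg (Real.exp_pos _).le]
    rw [integral_const_mul, integral_exp, norm_div, norm_div, norm_pow ((n : ℝ) + 1),
      Real.norm_of_nonneg (by positivity : 0 ≤ (n : ℝ) + 1)]
    field
  have hasSum_integral := hasSum_integral_of_summable_integral_norm integrable_terms <| by
    simpa only [integral_norm_terms] using hasSum_alternating_one_div_add_one_sq.summable.norm
  simp only [integral_terms] at hasSum_integral
  calc ∫ x in Ioi (0 : ℝ), logOneAddExpNeg x
      = ∫ x in Ioi (0 : ℝ), ∑' n : ℕ,
          (-1) ^ n / ((n : ℝ) + 1) * Real.exp (-((n : ℝ) + 1) * x) :=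
        setIntegral_congr_fun measurableSet_Ioi fun x hx => (hasSum_exp_series hx).tsum_eq.symm
    _ = Real.pi ^ 2 / 12 := hasSum_integral.unique hasSum_alternating_one_div_add_one_sq

lemma abs_integral_Ioi_sub_le (x : ℝ) :
    |(∫ t in Ioi x, logOneAddExpNeg t) - (Real.pi ^ 2 / 12 - x * Real.log 2)| ≤ x ^ 2 := by
  have hsplit :=
    intervalIntegral.integral_interval_add_Ioi (integrableOn_Ioi 0) (integrableOn_Ioi x)
  have hlip := norm_integral_sub_smul_le_of_lipschitzWith lipschitzWith_one 0 x
  rw [integral_Ioi_zero] at hsplit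
  rw [sub_zero, sq_abs, NNReal.coe_one, one_mul, smul_eq_mul, apply_zero, Real.norm_eq_abs,
    ← abs_neg] at hlip
  convert hlip using 2
  linarith

end logOneAddExpNeg

lemma log_qPochInfR_neg_exp {κ : ℝ} (hκ : 0 < κ) (x : ℝ) :
    Real.log (qPochInfR (-Real.exp (-x)) (Real.exp (-κ)))
      = ∑' k : ℕ, logOneAddExpNeg (x + k * κ) := by
  have factor_eq (k : ℕ) :
      1 - -Real.exp (-x) * Real.exp (-κ) ^ k = 1 + Real.exp (-(x + k * κ)) := by
    rw [← Real.exp_nat_mul, neg_mul, sub_neg_eq_add, ← Real.exp_add]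
    ring_nf
  simp only [qPochInfR, factor_eq]
  rw [← Real.rexp_tsum_eq_tprod (fun k => by positivity)
    (logOneAddExpNeg.summable_arithmetic hκ x), Real.log_exp]
  rfl

lemma abs_mul_log_qPochInfR_sub_integral_le {κ : ℝ} (hκ : 0 < κ) (x : ℝ) :
    |κ * (Real.log (qPochInfR (-Real.exp (-x)) (Real.exp (-κ))) - logOneAddExpNeg x / 2)
      - ∫ t in Ioi x, logOneAddExpNeg t| ≤ κ ^ 2 / 2 := by
  obtain ⟨hnonneg, hle⟩ := trapezoidal_sum_sub_integral_Ioi_mem_Icc_of_convexOn hκ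
    (logOneAddExpNeg.convexOn.subset (subset_univ _) (convex_Ici x))
    (fun t _ => logOneAddExpNeg.hasDerivAt t) (logOneAddExpNeg.integrableOn_Ioi x)
    (logOneAddExpNeg.summable_arithmetic hκ x)
  rw [log_qPochInfR_neg_exp hκ, abs_of_nonneg hnonneg]
  nlinarith [Real.sigmoid_le_one (-x), sq_nonneg κ]

theorem statement16_general {κ : ℝ} (hκ : 0 < κ) (z : ℝ) :
    |Real.log (qPochInfR (-Real.exp (-(κ * z))) (Real.exp (-κ))) -
        Real.pi ^ 2 / (12 * κ) + (z - 1 / 2) * Real.log 2| ≤ κ * (1 + |z|) ^ 2 := by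
  set L := Real.log (qPochInfR (-Real.exp (-(κ * z))) (Real.exp (-κ)))
  set I := ∫ t in Ioi (κ * z), logOneAddExpNeg t
  set F := logOneAddExpNeg (κ * z)
  have hsum : |κ * (L - F / 2) - I| ≤ κ ^ 2 / 2 := abs_mul_log_qPochInfR_sub_integral_le hκ _
  have hint : |I - (Real.pi ^ 2 / 12 - κ * z * Real.log 2)| ≤ (κ * z) ^ 2 :=
    logOneAddExpNeg.abs_integral_Ioi_sub_le _
  have hval : |F - Real.log 2| ≤ κ * |z| := by
    have := logOneAddExpNeg.lipschitzWith_one.norm_sub_le (κ * z) 0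
    rwa [logOneAddExpNeg.apply_zero, NNReal.coe_one, one_mul, sub_zero, norm_mul,
      Real.norm_of_nonneg hκ.le] at this
  refine le_of_mul_le_mul_left ?_ hκ
  calc κ * |L - Real.pi ^ 2 / (12 * κ) + (z - 1 / 2) * Real.log 2|
      = |(κ * (L - F / 2) - I) + (I - (Real.pi ^ 2 / 12 - κ * z * Real.log 2))
          + κ / 2 * (F - Real.log 2)| := by
        rw [← abs_of_pos hκ, ← abs_mul, abs_of_pos hκ]
        congr 1
        field
    _ ≤ |κ * (L - F / 2) - I| + |I - (Real.pi ^ 2 / 12 - κ * z * Real.log 2)|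
          + κ / 2 * |F - Real.log 2| := by
        refine (abs_add_three _ _ _).trans_eq ?_
        rw [abs_mul (κ / 2), abs_of_pos (half_pos hκ)]
    _ ≤ κ ^ 2 / 2 + (κ * z) ^ 2 + κ / 2 * (κ * |z|) := by gcongr
    _ ≤ κ * (κ * (1 + |z|) ^ 2) := by
        rw [mul_pow, ← sq_abs z]
        nlinarith [mul_nonneg (sq_nonneg κ) (abs_nonneg z), sq_nonneg κ]

theorem statement16 (b ε : ℝ) (hb : b ∈ Set.Ioo (0 : ℝ) 1)
    (hε : ε ∈ Set.Ioo (0 : ℝ) (1 / 2)) :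
    ∃ C > (0 : ℝ), ∃ κ₀ > (0 : ℝ), ∀ κ : ℝ, 0 < κ → κ < κ₀ → ∀ z : ℝ,
      |Real.log (qPochInfR (-Real.exp (-(κ * z))) (Real.exp (-κ))) -
        Real.pi ^ 2 / (12 * κ) + (z - 1 / 2) * Real.log 2| ≤
      C * (κ * (1 + |z|) ^ (2 : ℕ) + κ ^ b * (1 + |z|) ^ (1 + 2 * b + ε)) := by
  refine ⟨1, one_pos, 1, one_pos, fun κ hκ _ z => (statement16_general hκ z).trans ?_⟩
  rw [one_mul]
  exact le_add_of_nonneg_right (by positivity)
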